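/- Let p < q be primes, 0 ≤ j < p, and let I be any subset of {0, 1, ..., q-1}. Then the polynomial Σ_{i∈I} (x^{j+ip} mod Φ_{pq}(x)) has all coefficients in {-1, 0, 1}. -/

import Mathlib

open Polynomial Finset

/-!
Let `r` be the remainder of `g = ∑ i, c i * x ^ (j + i * p)` modulo `Φ`. As `Φ` divides `g - r`, the
coefficients `F` of `g - r` modulo `x ^ (p * q) - 1`, read as a `p * q`-periodic function on `ℤ`,
satisfy `F m + F (m + p + q) = F (m + p) + F (m + q)`, so `F = a + b` with `a` of period `p` and `b`
of period `q`.

Since `deg Φ = p * q - p - q + 1`, the remainder vanishes on a window of `p + q - 1` consecutive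
exponents, where therefore `g = a + b`. Suppose that `lo ≤ c i ≤ hi` and normalize `a j = 0`. As `g`
vanishes off the class of `j` modulo `p`, on the window "`m ≡ j` or `-a m ∈ [lo, hi]`" is equivalent
to "`b m ∈ [lo, hi]`". These two properties have periods `p` and `q`, so by the Fine–Wilf theorem
both of them hold everywhere or neither does; the first holds at `j`. Hence every value of
`r = g - a - b` is a difference of two elements of `[lo, hi]`.
-/

theorem eq_of_periodic_of_eqOn_window {α : Type*} {p q : ℕ} (hp : 0 < p) (hq : 0 < q)
    (hpq : p.Coprime q) {u v : ℤ → α} (hu : Function.Periodic u p) (hv : Function.Periodic v q)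
    {N : ℤ} (huv : ∀ m, N < m → m < N + p + q → u m = v m) (m m' : ℤ) : u m = v m' := by
  let w : List α := List.ofFn fun i : Fin (p + q - 1) ↦ u (N + 1 + i)
  have hw {i : ℕ} (hi : i < p + q - 1) : w[i]? = some (u (N + 1 + i)) := by
    simp [w, hi]
  have hw_length : w.length = p + q - 1 := List.length_ofFn
  have hwp : w.HasPeriod p := List.hasPeriod_iff_getElem?.2 fun i hi ↦ by
    rw [hw (by lia), hw (by lia), Nat.cast_add, ← add_assoc, hu]
  have hwq : w.HasPeriod q := List.hasPeriod_iff_getElem?.2 fun i hi ↦ by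
    rw [hw (by lia), hw (by lia), huv _ (by lia) (by lia), huv _ (by lia) (by lia),
      Nat.cast_add, ← add_assoc, hv]
  have hw_one : w.HasPeriod 1 := by
    simpa only [hpq.gcd_eq_one] using hwp.gcd hwq (by rw [hw_length, hpq.gcd_eq_one])
  have hconst (y : ℤ) (hNy : N < y) (hy : y < N + p + q) : u y = u (N + 1) := by
    obtain ⟨i, rfl⟩ : ∃ i : ℕ, y = N + 1 + i := ⟨(y - N - 1).toNat, by lia⟩
    have := hw_one.getElem?_mod 1 i w (by lia)
    rw [Nat.mod_one, hw (by lia), hw (by lia)] at this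
    simpa using this.symm
  obtain ⟨y, ⟨hNy, hyp⟩, hmy⟩ := hu.exists_mem_Ico (mod_cast hp) m (N + 1)
  obtain ⟨z, ⟨hNz, hzq⟩, hmz⟩ := hv.exists_mem_Ico (mod_cast hq) m' (N + 1)
  rw [hmy, hmz, ← huv z (by lia) (by lia), hconst y (by lia) (by lia), hconst z (by lia) (by lia)]

theorem exists_periodic_add_periodic {R : Type*} [AddCommGroup R] {p q : ℤ} (hpq : IsCoprime p q)
    {F : ℤ → R} (hF : Function.Periodic F (p * q))
    (hpar : ∀ m, F m + F (m + p + q) = F (m + p) + F (m + q)) :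
    ∃ a b : ℤ → R, Function.Periodic a p ∧ Function.Periodic b q ∧ ∀ m, F m = a m + b m := by
  have parallelogram (k l : ℤ) : F 0 + F (k * p + l * q) = F (k * p) + F (l * q) := by
    have hq : Function.Periodic (fun m ↦ F (m + q) - F m) p := fun m ↦ by
      rw [sub_eq_sub_iff_add_eq_add, add_comm, hpar, add_comm]
    have hkp : Function.Periodic (fun m ↦ F (m + k * p) - F m) q := fun m ↦ by
      have := hq.int_mul k m
      simp only [Int.cast_id, sub_eq_sub_iff_add_eq_add, add_right_comm m q] at this ⊢
      rw [this, add_comm]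
    have := hkp.int_mul l 0
    simp only [Int.cast_id, zero_add, sub_eq_sub_iff_add_eq_add] at this
    rw [add_comm, add_comm (k * p), this]
  obtain ⟨k, l, hkl⟩ := hpq
  refine ⟨fun m ↦ F (m * l * q) - F 0, fun m ↦ F (m * k * p), fun m ↦ ?_, fun m ↦ ?_, fun m ↦ ?_⟩
  · have := hF.int_mul l (m * l * q)
    rw [Int.cast_id] at this
    simp only [← this]
    ring_nf
  · have := hF.int_mul k (m * k * p)
    rw [Int.cast_id] at this
    simp only [← this]
    ring_nf
  · have hm : m * k * p + m * l * q = m := by linear_combination m * hkl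
    have := parallelogram (m * k) (m * l)
    rw [hm] at this
    rw [sub_add_eq_add_sub, add_comm (F (m * l * q)), ← this, add_sub_cancel_left]

theorem abs_le_of_sub_eq_periodic_add_periodic {R : Type*} [AddCommGroup R] [LinearOrder R]
    [IsOrderedAddMonoid R] {p q : ℕ} (hp : 0 < p) (hq : 0 < q) (hpq : p.Coprime q)
    {a b g r : ℤ → R} (ha : Function.Periodic a p) (hb : Function.Periodic b q)
    (hab : ∀ m, g m - r m = a m + b m) {N : ℤ} (hr : ∀ m, N < m → m < N + p + q → r m = 0)
    {j : ℤ} {lo hi : R} (hg : ∀ m, m ≡ j [ZMOD p] → g m ∈ Set.Icc lo hi)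
    (hg₀ : ∀ m, ¬ m ≡ j [ZMOD p] → g m = 0) (m : ℤ) : |r m| ≤ hi - lo := by
  have haj {m : ℤ} (hm : m ≡ j [ZMOD p]) : a m = a j := by
    obtain ⟨k, hk⟩ := hm.dvd
    rw [← ha.int_mul k m, Int.cast_id, mul_comm, ← hk, add_sub_cancel]
  let u (m : ℤ) : Prop := m ≡ j [ZMOD p] ∨ a j - a m ∈ Set.Icc lo hi
  let v (m : ℤ) : Prop := b m + a j ∈ Set.Icc lo hi
  have hu : Function.Periodic u p := fun m ↦ by simp [u, Int.ModEq, ha m]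
  have hv : Function.Periodic v q := fun m ↦ by simp only [v, hb m]
  have huv (m : ℤ) (hNm : N < m) (hm : m < N + p + q) : u m = v m := by
    have hgab : g m = a m + b m := by rw [← hab, hr m hNm hm, sub_zero]
    by_cases hmj : m ≡ j [ZMOD p]
    · have : v m := by
        simpa only [v, add_comm (b m), ← haj hmj, ← hgab] using hg m hmj
      simp only [u, hmj, this, true_or]
    · have : b m = -a m := by
        rw [eq_neg_iff_add_eq_zero, add_comm, ← hgab, hg₀ m hmj]
      simp only [u, v, hmj, this, false_or, neg_add_eq_sub]
  have hu_eq_v := eq_of_periodic_of_eqOn_window hp hq hpq hu hv huv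
  have hv_all (m : ℤ) : v m := hu_eq_v j m ▸ Or.inl rfl
  have hu_all (m : ℤ) : u m := (hu_eq_v m m).symm ▸ hv_all m
  have hrm : r m = g m - (a m + b m) := by rw [← hab, sub_sub_cancel]
  by_cases hmj : m ≡ j [ZMOD p]
  · rw [hrm, haj hmj, add_comm]
    exact abs_sub_le_of_le_of_le (hg m hmj).1 (hg m hmj).2 (hv_all m).1 (hv_all m).2
  · have : r m = (a j - a m) - (b m + a j) := by rw [hrm, hg₀ m hmj]; abel
    obtain ⟨hlo, hhi⟩ := (hu_all m).resolve_left hmj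
    rw [this]
    exact abs_sub_le_of_le_of_le hlo hhi (hv_all m).1 (hv_all m).2

section CyclicCoeff

/-- The coefficient of `x ^ m` in the class of a polynomial in `R[x] / (x ^ N - 1)`, that is, the
sum of its coefficients at the exponents congruent to `m` modulo `N`. The exponent is an integer,
so that the coefficients form an `N`-periodic function on `ℤ`. -/
def cyclicCoeff (R : Type*) [CommRing R] (N : ℕ) (m : ℤ) : R[X] →ₗ[R] R :=
  lsum fun k ↦ if k ≡ m [ZMOD N] then LinearMap.id else 0

variable {R : Type*} [CommRing R]

theorem cyclicCoeff_apply (N : ℕ) (m : ℤ) (f : R[X]) :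
    cyclicCoeff R N m f = f.sum fun k c ↦ if k ≡ m [ZMOD N] then c else 0 := by
  refine Finset.sum_congr rfl fun k _ ↦ ?_
  dsimp only
  split_ifs <;> rfl

theorem cyclicCoeff_monomial (N : ℕ) (m : ℤ) (k : ℕ) (c : R) :
    cyclicCoeff R N m (monomial k c) = if k ≡ m [ZMOD N] then c else 0 := by
  rw [cyclicCoeff_apply]
  exact sum_monomial_index c (fun k c ↦ if k ≡ m [ZMOD N] then c else 0) (ite_self 0)

theorem cyclicCoeff_periodic (N : ℕ) (f : R[X]) :
    Function.Periodic (fun m ↦ cyclicCoeff R N m f) N := fun m ↦ by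
  simp only [cyclicCoeff_apply, Int.modEq_add_modulus_iff]

theorem cyclicCoeff_mul_X_pow (N : ℕ) (m : ℤ) (f : R[X]) (k : ℕ) :
    cyclicCoeff R N m (f * X ^ k) = cyclicCoeff R N (m - k) f := by
  induction f using Polynomial.induction_on' with
  | add f g hf hg => rw [add_mul, map_add, map_add, hf, hg]
  | monomial n c =>
    simp only [monomial_mul_X_pow, cyclicCoeff_monomial, Nat.cast_add, Int.modEq_iff_dvd,
      sub_add_eq_sub_sub_swap]

theorem cyclicCoeff_mul_X_pow_sub_one (N : ℕ) (m : ℤ) (f : R[X]) :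
    cyclicCoeff R N m (f * (X ^ N - 1)) = 0 := by
  rw [mul_sub_one, map_sub, cyclicCoeff_mul_X_pow, (cyclicCoeff_periodic N f).sub_eq, sub_self]

theorem cyclicCoeff_eq_coeff {N : ℕ} {f : R[X]} (hf : f.degree < N) {n : ℕ} (hn : n < N) :
    cyclicCoeff R N n f = f.coeff n := by
  rw [cyclicCoeff_apply, sum_def, Finset.sum_eq_single n, if_pos Int.ModEq.rfl]
  · intro k hk hkn
    have hkN : k < N := mod_cast (le_degree_of_mem_supp k hk).trans_lt hf
    rw [if_neg]
    rw [Int.natCast_modEq_iff]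
    exact fun h ↦ hkn (h.eq_of_lt_of_lt hkN hn)
  · intro hn
    rw [if_pos Int.ModEq.rfl, notMem_support_iff.1 hn]

theorem cyclicCoeff_sum_smul_X_pow (N : ℕ) (m : ℤ) {ι : Type*} (s : Finset ι) (c : ι → R)
    (e : ι → ℕ) :
    cyclicCoeff R N m (∑ i ∈ s, c i • X ^ e i) = ∑ i ∈ s with e i ≡ m [ZMOD N], c i := by
  simp only [map_sum, ← monomial_one_right_eq_X_pow, smul_monomial, smul_eq_mul, mul_one,
    cyclicCoeff_monomial, Finset.sum_filter]

theorem cyclicCoeff_progression_eq_zero {p j : ℕ} {m : ℤ} (hm : ¬ m ≡ j [ZMOD p]) (q : ℕ)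
    (c : ℕ → R) : cyclicCoeff R (p * q) m (∑ i ∈ range q, c i • X ^ (j + i * p)) = 0 := by
  rw [cyclicCoeff_sum_smul_X_pow, Finset.filter_eq_empty_iff.2, Finset.sum_empty]
  intro i _ him
  have hip : (j + i * p : ℕ) ≡ m [ZMOD p] := him.of_dvd (mod_cast Nat.dvd_mul_right p q)
  exact hm (hip.symm.trans (by simp [Int.ModEq]))

theorem exists_cyclicCoeff_progression_eq {p q j : ℕ} (hp : 0 < p) (hq : 0 < q) {m : ℤ}
    (hm : m ≡ j [ZMOD p]) (c : ℕ → R) :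
    ∃ i < q, cyclicCoeff R (p * q) m (∑ i ∈ range q, c i • X ^ (j + i * p)) = c i := by
  obtain ⟨k, hk⟩ := hm.symm.dvd
  obtain ⟨i, hiq, hik⟩ := Int.existsUnique_equiv_nat k (b := q) (mod_cast hq)
  have hiq : i < q := mod_cast hiq
  have hmod (i' : ℕ) : (j + i' * p : ℕ) ≡ m [ZMOD (p * q : ℕ)] ↔ i' ≡ i [MOD q] := by
    have hdiff : m - (j + i' * p : ℕ) = p * (k - i') := by
      push_cast
      linear_combination hk
    have hp' : (p : ℤ) ≠ 0 := mod_cast hp.ne'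
    rw [Int.modEq_iff_dvd, hdiff, Nat.cast_mul, mul_dvd_mul_iff_left hp', ← Int.modEq_iff_dvd,
      ← Int.natCast_modEq_iff]
    exact ⟨fun h ↦ h.trans hik.symm, fun h ↦ h.trans hik⟩
  refine ⟨i, hiq, ?_⟩
  rw [cyclicCoeff_sum_smul_X_pow, Finset.sum_eq_single_of_mem i]
  · exact Finset.mem_filter.2 ⟨Finset.mem_range.2 hiq, (hmod i).2 rfl⟩
  · intro i' hi' hne
    obtain ⟨hi'q, hi'm⟩ := Finset.mem_filter.1 hi'
    exact absurd (((hmod i').1 hi'm).eq_of_lt_of_lt (Finset.mem_range.1 hi'q) hiq) hne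

end CyclicCoeff

theorem degree_modByMonic_lt_natDegree {R : Type*} [CommRing R] [Nontrivial R] {Q : R[X]}
    (hQ : Q.Monic) (g : R[X]) : (g %ₘ Q).degree < Q.natDegree := by
  rw [← degree_eq_natDegree hQ.ne_zero]
  exact degree_modByMonic_lt g hQ

/-- `Q` is the inclusion–exclusion polynomial of `p` and `q`, that is,
`(x ^ (p * q) - 1) * (x - 1) / ((x ^ p - 1) * (x ^ q - 1))`, which for distinct primes is the
cyclotomic polynomial of index `p * q`. The quotient is characterized without division, which
determines `Q` when `p` and `q` are positive. -/
def IsInclusionExclusion {R : Type*} [CommRing R] (Q : R[X]) (p q : ℕ) : Prop :=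
  Q * ((X ^ p - 1) * (X ^ q - 1)) = (X ^ (p * q) - 1) * (X - 1)

theorem isInclusionExclusion_cyclotomic (R : Type*) [CommRing R] {p q : ℕ} (hp : p.Prime)
    (hq : q.Prime) (hpq : p ≠ q) : IsInclusionExclusion (cyclotomic (p * q) R) p q := by
  have := Fact.mk hq
  have hmul : cyclotomic (p * q) R * cyclotomic q R * (X ^ p - 1) = X ^ (p * q) - 1 := by
    have hpq' : ¬ p ∣ q := mt (Nat.prime_dvd_prime_iff_eq hp hq).1 hpq
    rw [mul_comm p q, ← cyclotomic_expand_eq_cyclotomic_mul hp hpq', mul_comm q p]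
    simpa [pow_mul] using congrArg (expand R p) (cyclotomic_prime_mul_X_sub_one R q)
  rw [IsInclusionExclusion, ← cyclotomic_prime_mul_X_sub_one R q, ← hmul]
  ring

namespace IsInclusionExclusion

variable {R : Type*} [CommRing R] {p q : ℕ} {Q : R[X]}

theorem monic (hQ : IsInclusionExclusion Q p q) (hp : 0 < p) (hq : 0 < q) : Q.Monic := by
  have hprod : ((X ^ (p * q) - 1) * (X - 1) : R[X]).Monic :=
    (monic_X_pow_sub_C 1 (Nat.mul_pos hp hq).ne').mul (monic_X_sub_C 1)
  exact ((monic_X_pow_sub_C 1 hp.ne').mul (monic_X_pow_sub_C 1 hq.ne')).of_mul_monic_right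
    (hQ.symm ▸ hprod)

theorem natDegree_add [Nontrivial R] (hQ : IsInclusionExclusion Q p q) (hp : 0 < p) (hq : 0 < q) :
    Q.natDegree + (p + q) = p * q + 1 := by
  have hmonic {n : ℕ} (hn : 0 < n) : (X ^ n - 1 : R[X]).Monic := monic_X_pow_sub_C 1 hn.ne'
  have hdeg (n : ℕ) : (X ^ n - 1 : R[X]).natDegree = n := natDegree_X_pow_sub_C
  have hdeg_one : (X - 1 : R[X]).natDegree = 1 := natDegree_X_sub_C 1
  have hmonic_one : (X - 1 : R[X]).Monic := monic_X_sub_C 1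
  have := congrArg natDegree hQ
  rwa [(hQ.monic hp hq).natDegree_mul ((hmonic hp).mul (hmonic hq)),
    (hmonic hp).natDegree_mul (hmonic hq), (hmonic (Nat.mul_pos hp hq)).natDegree_mul hmonic_one,
    hdeg, hdeg, hdeg, hdeg_one] at this

theorem cyclicCoeff_add_cyclicCoeff (hQ : IsInclusionExclusion Q p q) {f : R[X]} (hf : Q ∣ f)
    (m : ℤ) :
    cyclicCoeff R (p * q) m f + cyclicCoeff R (p * q) (m + p + q) f =
      cyclicCoeff R (p * q) (m + p) f + cyclicCoeff R (p * q) (m + q) f := by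
  obtain ⟨h, rfl⟩ := hf
  set f := Q * h
  have hexpand : f * X ^ (p + q) + f = f * X ^ q + f * X ^ p + h * (X - 1) * (X ^ (p * q) - 1) := by
    rw [IsInclusionExclusion] at hQ
    linear_combination h * hQ
  have := congrArg (cyclicCoeff R (p * q) (m + p + q)) hexpand
  simp only [map_add, cyclicCoeff_mul_X_pow_sub_one, cyclicCoeff_mul_X_pow, add_zero] at this
  have hpq : m + p + q - (p + q : ℕ) = m := by lia
  rwa [hpq, add_sub_cancel_right, add_sub_right_comm, add_sub_cancel_right] at this

theorem cyclicCoeff_modByMonic [Nontrivial R] (hQ : IsInclusionExclusion Q p q) (hp : 0 < p)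
    (hq : 0 < q) (g : R[X]) {n : ℕ} (hn : n < p * q) :
    cyclicCoeff R (p * q) n (g %ₘ Q) = (g %ₘ Q).coeff n := by
  have hdegQ := hQ.natDegree_add hp hq
  have hdeg := degree_modByMonic_lt_natDegree (hQ.monic hp hq) g
  exact cyclicCoeff_eq_coeff (hdeg.trans_le (mod_cast by lia)) hn

theorem cyclicCoeff_modByMonic_eq_zero [Nontrivial R] (hQ : IsInclusionExclusion Q p q)
    (hp : 0 < p) (hq : 0 < q) (g : R[X]) {m : ℤ} (hm : (p * q - p - q : ℤ) < m)
    (hm' : m < p * q) : cyclicCoeff R (p * q) m (g %ₘ Q) = 0 := by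
  have hdegQ := hQ.natDegree_add hp hq
  zify at hdegQ
  lift m to ℕ using by lia
  rw [hQ.cyclicCoeff_modByMonic hp hq g (mod_cast hm')]
  exact coeff_eq_zero_of_degree_lt
    ((degree_modByMonic_lt_natDegree (hQ.monic hp hq) g).trans_le (mod_cast by lia))

theorem abs_coeff_modByMonic_le [LinearOrder R] [IsOrderedAddMonoid R]
    (hQ : IsInclusionExclusion Q p q) (hp : 0 < p) (hq : 0 < q) (hpq : p.Coprime q) {g : R[X]}
    {j : ℤ} {lo hi : R}
    (hg : ∀ m, m ≡ j [ZMOD p] → cyclicCoeff R (p * q) m g ∈ Set.Icc lo hi)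
    (hg₀ : ∀ m, ¬ m ≡ j [ZMOD p] → cyclicCoeff R (p * q) m g = 0) (n : ℕ) :
    |(g %ₘ Q).coeff n| ≤ hi - lo := by
  nontriviality R
  have hdvd : Q ∣ g - g %ₘ Q := ⟨g /ₘ Q, by rw [sub_eq_iff_eq_add', modByMonic_add_div]⟩
  obtain ⟨a, b, ha, hb, hab⟩ := exists_periodic_add_periodic (Nat.isCoprime_iff_coprime.2 hpq)
    (mod_cast cyclicCoeff_periodic (p * q) (g - g %ₘ Q)) (hQ.cyclicCoeff_add_cyclicCoeff hdvd)
  simp only [map_sub] at hab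
  obtain hn | hn := lt_or_ge n (p * q)
  · rw [← hQ.cyclicCoeff_modByMonic hp hq g hn]
    exact abs_le_of_sub_eq_periodic_add_periodic hp hq hpq ha hb hab
      (fun m hm hm' ↦ hQ.cyclicCoeff_modByMonic_eq_zero hp hq g hm (by lia)) hg hg₀ n
  · have hdegQ := hQ.natDegree_add hp hq
    have hcoeff : (g %ₘ Q).coeff n = 0 := coeff_eq_zero_of_degree_lt
      ((degree_modByMonic_lt_natDegree (hQ.monic hp hq) g).trans_le (mod_cast by lia))
    rw [hcoeff, abs_zero, sub_nonneg]
    exact (hg j rfl).1.trans (hg j rfl).2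

end IsInclusionExclusion

theorem subset_sum_coeff_le_one_general {R : Type*} [CommRing R] [LinearOrder R]
    [IsOrderedAddMonoid R] {p q : ℕ} (hp : 0 < p) (hq : 0 < q) (hpq : p.Coprime q) {Q : R[X]}
    (hQ : IsInclusionExclusion Q p q) (j : ℕ) {c : ℕ → R} {lo hi : R}
    (hc : ∀ i < q, c i ∈ Set.Icc lo hi) (n : ℕ) :
    |(∑ i ∈ range q, c i • (X ^ (j + i * p) %ₘ Q)).coeff n| ≤ hi - lo := by
  have hsum : ∑ i ∈ range q, c i • (X ^ (j + i * p) %ₘ Q) =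
      (∑ i ∈ range q, c i • X ^ (j + i * p)) %ₘ Q := by
    simp only [← modByMonicHom_apply, map_sum, map_smul]
  rw [hsum]
  refine hQ.abs_coeff_modByMonic_le hp hq hpq (j := j) (fun m hm ↦ ?_)
    (fun m hm ↦ cyclicCoeff_progression_eq_zero hm q c) n
  obtain ⟨i, hiq, hci⟩ := exists_cyclicCoeff_progression_eq hp hq hm c
  exact hci ▸ hc i hiq

theorem subset_sum_coeff_le_one (p q j : ℕ) (hp : p.Prime) (hq : q.Prime)
    (hpq : p < q) (hj : j < p) (I : Finset ℕ) (hI : I ⊆ Finset.range q) :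
    ∀ n, |(∑ i ∈ I, X ^ (j + i * p) %ₘ cyclotomic (p * q) ℤ).coeff n| ≤ 1 := by
  have := subset_sum_coeff_le_one_general hp.pos hq.pos ((Nat.coprime_primes hp hq).2 hpq.ne)
    (isInclusionExclusion_cyclotomic ℤ hp hq hpq.ne) j (c := fun i ↦ if i ∈ I then 1 else 0)
    (lo := 0) (hi := 1) fun i _ ↦ by split_ifs <;> simp
  simpa [ite_smul, Finset.inter_eq_right.2 hI] using this
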